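/- There exist absolute constants k ≥ 0 and, for each C₀, C_f > 0, a constant C = C(C₀, C_f) with the following property. Let t > 0 and x ∈ ℝ². Let K_g : [0,t] × ℝ² → [0,∞) be measurable and suppose that for every a ∈ [0,t] the flux of K_g on the backward light cone with tip (a,x) is at most C_f. Let f : [0,t] × ℝ² × ℝ² → [0,∞) be measurable with f ≤ C₀ almost everywhere. Then for every ε ∈ (0,1]: ∫₀ᵗ ∫_{|y−x| ≤ t−s} ∫_{ℝ²} K_g(s,y) f(s,y,p) / ( p_0 (1 + p̂·ξ) √((t−s)² − |y−x|²) ) dp dy ds ≤ C (1+t)^k [ ε^{−1/10} ( ∫₀ᵗ ∫_{|y−x| ≤ t−s} (∫_{ℝ²} p_0² f dp) / √((t−s)² − |y−x|²) dy ds )^{2/5} + ε^{3/10} ( ∫₀ᵗ ∫_{|y−x| ≤ t−s} (∫_{ℝ²} p_0⁴ f dp) / √((t−s)² − |y−x|²) dy ds )^{2/5} ]. -/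

import Mathlib

open MeasureTheory Set
open scoped NNReal ENNReal RealInnerProductSpace

/-- `p₀ = √(1 + |p|²)` for `p ∈ ℝ²`. -/
noncomputable def pZero (p : EuclideanSpace ℝ (Fin 2)) : ℝ := Real.sqrt (1 + ‖p‖ ^ 2)

/-- `p̂ = p / p₀` for `p ∈ ℝ²`. -/
noncomputable def pHat (p : EuclideanSpace ℝ (Fin 2)) : EuclideanSpace ℝ (Fin 2) :=
  (pZero p)⁻¹ • p

/-- The unit vector `(cos θ, sin θ) ∈ ℝ²`. -/
noncomputable def unitVec (θ : ℝ) : EuclideanSpace ℝ (Fin 2) :=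
  (EuclideanSpace.equiv (Fin 2) ℝ).symm ![Real.cos θ, Real.sin θ]

/-- The flux `∫₀^a ∫₀^{2π} (a−s) K_g(s, x + (a−s)ω(θ))² dθ ds` of `K_g` on the backward
light cone with tip `(a, x)`. -/
noncomputable def coneFlux (Kg : ℝ → EuclideanSpace ℝ (Fin 2) → ℝ) (a : ℝ)
    (x : EuclideanSpace ℝ (Fin 2)) : ℝ≥0∞ :=
  ∫⁻ s in Ioc (0 : ℝ) a, ∫⁻ θ in Ioc (0 : ℝ) (2 * Real.pi),
    ENNReal.ofReal ((a - s) * Kg s (x + (a - s) • unitVec θ) ^ 2)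

/-! The flux bound controls `K_g` on the mantle of every cone with tip `(a, x)`, so integrating
over `a` gives `∫ K_g² W(t - s - |y - x|) ≤ C_f ∫₀ᵗ W(e) de` on the solid cone for every weight `W`.

For `|ξ| < 1` the kernel `p₀ (1 + p̂·ξ)` dominates both `(1 - |ξ|) p₀` and `(1 + v²) / (2 p₀)`,
where `v` is the component of `p` transverse to `ξ`. The geometric mean of these bounds with weights
`β` and `1 - β`, followed by a splitting of the momentum integral at the optimal `p₀ = R`, bounds it
by a constant times `(1 - |ξ|)^(-β) (∫ p₀ⁿ f dp)^(2/5)` with `n = 4 - 5 β`. Hölder's inequality with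
exponents `2, 5/2, 10` then separates `K_g`, the moment and the remaining weight. Taking `β = 2/5`
where `t - s - |y - x| ≥ ε (t - s)` and `β = 0` in the remaining shell along the mantle yields the
two terms of the estimate. -/

local notation "ℝ²" => EuclideanSpace ℝ (Fin 2)

section PolarCoordinates

theorem measurePreserving_euclideanPlane_mk :
    MeasurePreserving (fun z : ℝ × ℝ => (!₂[z.1, z.2] : ℝ²)) := by
  have hmk : (fun z : ℝ × ℝ => (!₂[z.1, z.2] : ℝ²)) =
      WithLp.toLp 2 ∘ (MeasurableEquiv.finTwoArrow : (Fin 2 → ℝ) ≃ᵐ ℝ × ℝ).symm := rfl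
  rw [hmk]
  exact (PiLp.volume_preserving_toLp (Fin 2)).comp (volume_preserving_finTwoArrow ℝ).symm

theorem unitVec_eq (θ : ℝ) : unitVec θ = !₂[Real.cos θ, Real.sin θ] := rfl

theorem measurable_unitVec : Measurable unitVec :=
  measurePreserving_euclideanPlane_mk.measurable.comp
    (Real.measurable_cos.prodMk Real.measurable_sin)

theorem norm_unitVec (θ : ℝ) : ‖unitVec θ‖ = 1 := by
  simp [EuclideanSpace.norm_eq, unitVec_eq]

theorem periodic_unitVec : Function.Periodic unitVec (2 * Real.pi) := fun θ => by
  simp only [unitVec_eq, Real.cos_add_two_pi, Real.sin_add_two_pi]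

theorem dist_add_smul_unitVec (x : ℝ²) {r : ℝ} (hr : 0 ≤ r) (θ : ℝ) :
    dist (x + r • unitVec θ) x = r := by
  rw [dist_self_add_left, norm_smul, norm_unitVec, Real.norm_of_nonneg hr, mul_one]

theorem lintegral_Ioc_add_eq_of_periodic {g : ℝ → ℝ≥0∞} {T : ℝ} (hg : Function.Periodic g T)
    (hT : 0 < T) (a b : ℝ) : ∫⁻ θ in Ioc a (a + T), g θ = ∫⁻ θ in Ioc b (b + T), g θ :=
  (isAddFundamentalDomain_Ioc hT a).setLIntegral_eq (isAddFundamentalDomain_Ioc hT b) g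
    hg.map_vadd_zmultiples

/-- The integral of `G` over the circle of centre `x` and radius `r` with respect to arc length;
it is `0` when `r ≤ 0`. -/
noncomputable def circleLIntegral (G : ℝ² → ℝ≥0∞) (x : ℝ²) (r : ℝ) : ℝ≥0∞ :=
  ENNReal.ofReal r * ∫⁻ θ in Ioc 0 (2 * Real.pi), G (x + r • unitVec θ)

theorem circleLIntegral_one (x : ℝ²) (r : ℝ) :
    circleLIntegral 1 x r = ENNReal.ofReal (2 * Real.pi * r) := by
  simp only [circleLIntegral, Pi.one_apply, setLIntegral_one, Real.volume_Ioc, sub_zero]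
  rw [mul_comm, ENNReal.ofReal_mul Real.two_pi_pos.le]

theorem circleLIntegral_mul_comp_dist {G : ℝ² → ℝ≥0∞} (hG : Measurable G) (g : ℝ → ℝ≥0∞) (x : ℝ²)
    (r : ℝ) :
    circleLIntegral (fun y => G y * g (dist y x)) x r = circleLIntegral G x r * g r := by
  rcases lt_or_ge r 0 with hr | hr
  · simp [circleLIntegral, ENNReal.ofReal_of_nonpos hr.le]
  · have := measurable_unitVec
    simp only [circleLIntegral, dist_add_smul_unitVec x hr]
    rw [lintegral_mul_const _ (by fun_prop), mul_assoc]

theorem lintegral_eq_lintegral_circleLIntegral {G : ℝ² → ℝ≥0∞} (hG : Measurable G) (x : ℝ²) :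
    ∫⁻ y, G y = ∫⁻ r in Ioi 0, circleLIntegral G x r := by
  have hGx : Measurable fun y => G (x + y) := by fun_prop
  have hpolar (p : ℝ × ℝ) :
      (!₂[(polarCoord.symm p).1, (polarCoord.symm p).2] : ℝ²) = p.1 • unitVec p.2 := by
    ext i
    fin_cases i <;> simp [unitVec_eq, polarCoord]
  have := measurable_unitVec
  rw [← lintegral_add_left_eq_self _ x, ← measurePreserving_euclideanPlane_mk.lintegral_comp hGx,
    ← lintegral_comp_polarCoord_symm, polarCoord_target, Measure.volume_eq_prod,
    setLIntegral_prod _ (by simp only [hpolar]; fun_prop)]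
  refine lintegral_congr fun r => ?_
  have hperiodic : Function.Periodic (fun θ => G (x + r • unitVec θ)) (2 * Real.pi) := fun θ => by
    simp only [periodic_unitVec θ]
  have hshift := lintegral_Ioc_add_eq_of_periodic hperiodic Real.two_pi_pos (-Real.pi) 0
  rw [zero_add, show -Real.pi + 2 * Real.pi = Real.pi by ring] at hshift
  simp only [hpolar, smul_eq_mul]
  rw [setLIntegral_congr Ioo_ae_eq_Ioc, lintegral_const_mul' _ _ ENNReal.ofReal_ne_top, hshift,
    circleLIntegral]

theorem setLIntegral_closedBall_eq {G : ℝ² → ℝ≥0∞} (hG : Measurable G) (x : ℝ²) (T : ℝ) :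
    ∫⁻ y in Metric.closedBall x T, G y = ∫⁻ r in Ioc 0 T, circleLIntegral G x r := by
  have hball : (Metric.closedBall x T).indicator G =
      fun y => G y * (Iic T).indicator 1 (dist y x) := by
    ext y
    by_cases h : dist y x ≤ T <;> simp [h]
  rw [← lintegral_indicator Metric.isClosed_closedBall.measurableSet,
    lintegral_eq_lintegral_circleLIntegral
      (hG.indicator Metric.isClosed_closedBall.measurableSet) x,
    ← Ioi_inter_Iic, inter_comm, ← setLIntegral_indicator measurableSet_Iic]
  refine lintegral_congr fun r => ?_
  rw [hball, circleLIntegral_mul_comp_dist hG]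
  by_cases h : r ≤ T <;> simp [h]

theorem measurable_circleLIntegral {α : Type*} [MeasurableSpace α] {F : α → ℝ² → ℝ≥0∞}
    (hF : Measurable (Function.uncurry F)) (x : ℝ²) {r : α → ℝ} (hr : Measurable r) :
    Measurable fun s => circleLIntegral (F s) x (r s) := by
  have := measurable_unitVec
  refine (ENNReal.measurable_ofReal.comp hr).mul (Measurable.lintegral_prod_right'
    (f := fun w : α × ℝ => F w.1 (x + r w.1 • unitVec w.2)) ?_)
  exact hF.comp (by fun_prop : Measurable fun w : α × ℝ => (w.1, x + r w.1 • unitVec w.2))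

end PolarCoordinates

section ConeIntegrals

theorem setLIntegral_Ioc_comp_const_sub (W : ℝ → ℝ≥0∞) (t : ℝ) :
    ∫⁻ a in Ioc 0 t, W (t - a) = ∫⁻ e in Ioc 0 t, W e := by
  have h := (Measure.measurePreserving_sub_left volume t).setLIntegral_comp_preimage_emb
    (MeasurableEquiv.subLeft t).measurableEmbedding W (Ico 0 t)
  rw [preimage_const_sub_Ico, sub_self, sub_zero] at h
  rw [h, setLIntegral_congr Ico_ae_eq_Ioc]

theorem setLIntegral_Ioc_comp_sub_const (φ : ℝ → ℝ≥0∞) (s t : ℝ) :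
    ∫⁻ a in Ioc s t, φ (a - s) = ∫⁻ r in Ioc 0 (t - s), φ r := by
  have h := (measurePreserving_sub_right volume s).setLIntegral_comp_preimage_emb
    (MeasurableEquiv.subRight s).measurableEmbedding φ (Ioc 0 (t - s))
  rwa [preimage_sub_const_Ioc, zero_add, sub_add_cancel] at h

theorem lintegral_Ioc_Ioc_swap {φ : ℝ → ℝ → ℝ≥0∞} (hφ : Measurable (Function.uncurry φ))
    (b t : ℝ) :
    ∫⁻ s in Ioc b t, ∫⁻ a in Ioc s t, φ s a = ∫⁻ a in Ioc b t, ∫⁻ s in Ioc b a, φ s a := by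
  have hmeas : Measurable (Function.uncurry fun s a => (Ioi s).indicator (φ s) a) :=
    hφ.indicator (measurableSet_lt measurable_fst measurable_snd)
  calc
    _ = ∫⁻ s in Ioc b t, ∫⁻ a in Ioc b t, (Ioi s).indicator (φ s) a := by
      refine setLIntegral_congr_fun measurableSet_Ioc fun s hs => ?_
      rw [setLIntegral_indicator measurableSet_Ioi, inter_comm, Ioc_inter_Ioi,
        sup_of_le_right hs.1.le]
    _ = ∫⁻ a in Ioc b t, ∫⁻ s in Ioc b t, (Iio a).indicator (φ · a) s :=
      lintegral_lintegral_swap hmeas.aemeasurable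
    _ = _ := by
      refine setLIntegral_congr_fun measurableSet_Ioc fun a ha => ?_
      have hinter : Iio a ∩ Ioc b t = Ioo b a := by
        ext s
        simp only [mem_inter_iff, mem_Iio, mem_Ioc, mem_Ioo]
        exact ⟨fun h => ⟨h.2.1, h.1⟩, fun h => ⟨h.2, h.1, h.2.le.trans ha.2⟩⟩
      rw [setLIntegral_indicator measurableSet_Iio, hinter, setLIntegral_congr Ioo_ae_eq_Ioc]

/-- The solid backward light cone with tip `(t, x)`, truncated to times `0 < s ≤ t`. -/
def backwardCone (t : ℝ) (x : ℝ²) : Set (ℝ × ℝ²) :=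
  {z | z.1 ∈ Ioc 0 t ∧ dist z.2 x ≤ t - z.1}

/-- The time `t - s - |y - x|` between the event `z = (s, y)` and the backward light cone with tip
`(t, x)`: the event lies on the mantle of the cone with tip `(t - coneDepth t x z, x)`. -/
noncomputable def coneDepth (t : ℝ) (x : ℝ²) (z : ℝ × ℝ²) : ℝ := t - z.1 - dist z.2 x

variable {t : ℝ} {x : ℝ²}

theorem measurableSet_backwardCone : MeasurableSet (backwardCone t x) :=
  (measurable_fst measurableSet_Ioc).inter
    (measurableSet_le (measurable_snd.dist measurable_const) (measurable_const.sub measurable_fst))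

@[fun_prop]
theorem measurable_coneDepth : Measurable (coneDepth t x) := by
  unfold coneDepth
  fun_prop

theorem setLIntegral_backwardCone {F : ℝ × ℝ² → ℝ≥0∞} (hF : Measurable F) :
    ∫⁻ z in backwardCone t x, F z =
      ∫⁻ s in Ioc 0 t, ∫⁻ y in Metric.closedBall x (t - s), F (s, y) := by
  have hcone := measurableSet_backwardCone (t := t) (x := x)
  rw [← lintegral_indicator hcone, Measure.volume_eq_prod,
    lintegral_prod _ (hF.indicator hcone).aemeasurable, ← lintegral_indicator measurableSet_Ioc]
  refine lintegral_congr fun s => ?_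
  by_cases hs : s ∈ Ioc 0 t
  · have hslice : Prod.mk s ⁻¹' backwardCone t x = Metric.closedBall x (t - s) := by
      ext y
      exact and_iff_right hs
    rw [indicator_of_mem hs, ← lintegral_indicator Metric.isClosed_closedBall.measurableSet,
      ← hslice]
    exact lintegral_congr fun y => (indicator_comp_right (Prod.mk s)).symm
  · have hslice (y : ℝ²) : (s, y) ∉ backwardCone t x := fun h => hs h.1
    simp only [indicator_of_notMem hs, indicator_of_notMem (hslice _), lintegral_zero]

theorem setLIntegral_backwardCone_eq_lintegral_mantle {F : ℝ × ℝ² → ℝ≥0∞} (hF : Measurable F) :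
    ∫⁻ z in backwardCone t x, F z =
      ∫⁻ a in Ioc 0 t, ∫⁻ s in Ioc 0 a, circleLIntegral (fun y => F (s, y)) x (a - s) := by
  have hmeas : Measurable (Function.uncurry fun s a : ℝ =>
      circleLIntegral (fun y => F (s, y)) x (a - s)) :=
    measurable_circleLIntegral (F := fun (w : ℝ × ℝ) y => F (w.1, y))
      (hF.comp (by fun_prop : Measurable fun v : (ℝ × ℝ) × ℝ² => (v.1.1, v.2))) x (by fun_prop)
  rw [setLIntegral_backwardCone hF, ← lintegral_Ioc_Ioc_swap hmeas]
  refine lintegral_congr fun s => ?_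
  have hslice : Measurable fun y => F (s, y) := hF.comp measurable_prodMk_left
  rw [setLIntegral_closedBall_eq hslice, ← setLIntegral_Ioc_comp_sub_const]

theorem coneFlux_eq_lintegral_circleLIntegral (Kg : ℝ → ℝ² → ℝ) (a : ℝ) (x : ℝ²) :
    coneFlux Kg a x =
      ∫⁻ s in Ioc 0 a, circleLIntegral (fun y => ENNReal.ofReal (Kg s y ^ 2)) x (a - s) := by
  refine setLIntegral_congr_fun measurableSet_Ioc fun s hs => ?_
  simp only [circleLIntegral, ENNReal.ofReal_mul (sub_nonneg.2 hs.2)]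
  rw [lintegral_const_mul' _ _ ENNReal.ofReal_ne_top]

theorem setLIntegral_backwardCone_mul_comp_coneDepth {Kg : ℝ → ℝ² → ℝ}
    (hK : Measurable (Function.uncurry Kg)) {W : ℝ → ℝ≥0∞} (hW : Measurable W) :
    ∫⁻ z in backwardCone t x, ENNReal.ofReal (Kg z.1 z.2 ^ 2) * W (coneDepth t x z) =
      ∫⁻ a in Ioc 0 t, coneFlux Kg a x * W (t - a) := by
  have hKsq : Measurable fun z : ℝ × ℝ² => ENNReal.ofReal (Kg z.1 z.2 ^ 2) :=
    (hK.pow_const 2).ennreal_ofReal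
  rw [setLIntegral_backwardCone_eq_lintegral_mantle (by fun_prop)]
  refine lintegral_congr fun a => ?_
  rw [coneFlux_eq_lintegral_circleLIntegral, ← lintegral_mul_const _
    (measurable_circleLIntegral hKsq x (by fun_prop))]
  refine lintegral_congr fun s => ?_
  have h := circleLIntegral_mul_comp_dist (hKsq.comp (measurable_prodMk_left (x := s)))
    (fun r => W (t - s - r)) x (a - s)
  rwa [show t - s - (a - s) = t - a by ring] at h

theorem setLIntegral_backwardCone_mul_comp_coneDepth_le {Kg : ℝ → ℝ² → ℝ}
    (hK : Measurable (Function.uncurry Kg)) {W : ℝ → ℝ≥0∞} (hW : Measurable W) {B : ℝ≥0∞}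
    (hflux : ∀ a ∈ Ioc 0 t, coneFlux Kg a x ≤ B) :
    ∫⁻ z in backwardCone t x, ENNReal.ofReal (Kg z.1 z.2 ^ 2) * W (coneDepth t x z) ≤
      B * ∫⁻ e in Ioc 0 t, W e := by
  rw [setLIntegral_backwardCone_mul_comp_coneDepth hK hW, ← setLIntegral_Ioc_comp_const_sub W,
    ← lintegral_const_mul _ (by fun_prop)]
  exact setLIntegral_mono' measurableSet_Ioc fun a ha => mul_le_mul_left (hflux a ha) _

theorem setLIntegral_closedBall_comp_sub_dist_le {g : ℝ → ℝ≥0∞} (hg : Measurable g) (x : ℝ²)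
    (T : ℝ) :
    ∫⁻ y in Metric.closedBall x T, g (T - dist y x) ≤
      ENNReal.ofReal (2 * Real.pi * T) * ∫⁻ e in Ioc 0 T, g e := by
  rw [setLIntegral_closedBall_eq (by fun_prop), ← setLIntegral_Ioc_comp_const_sub g,
    ← lintegral_const_mul _ (by fun_prop)]
  refine setLIntegral_mono' measurableSet_Ioc fun r hr => ?_
  have h := circleLIntegral_mul_comp_dist measurable_one (fun r => g (T - r)) x r
  simp only [Pi.one_apply, one_mul] at h
  rw [h, circleLIntegral_one]
  gcongr
  exact hr.2

end ConeIntegrals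

section Kernel

theorem pZero_pos (p : ℝ²) : 0 < pZero p := by
  unfold pZero
  positivity

theorem pZero_sq (p : ℝ²) : pZero p ^ 2 = 1 + ‖p‖ ^ 2 :=
  Real.sq_sqrt (by positivity)

@[fun_prop]
theorem measurable_pZero : Measurable pZero := by
  unfold pZero
  fun_prop

theorem norm_le_pZero (p : ℝ²) : ‖p‖ ≤ pZero p :=
  Real.le_sqrt_of_sq_le (by linarith)

theorem pZero_mul_one_add_inner_pHat (p ξ : ℝ²) :
    pZero p * (1 + ⟪pHat p, ξ⟫) = pZero p + ⟪p, ξ⟫ := by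
  rw [pHat, real_inner_smul_left, mul_add, mul_one, mul_inv_cancel_left₀ (pZero_pos p).ne']

theorem one_sub_norm_mul_pZero_le (p ξ : ℝ²) :
    (1 - ‖ξ‖) * pZero p ≤ pZero p + ⟪p, ξ⟫ := by
  have hinner : -(pZero p * ‖ξ‖) ≤ ⟪p, ξ⟫ :=
    (neg_le_neg (mul_le_mul_of_nonneg_right (norm_le_pZero p) (norm_nonneg ξ))).trans
      (neg_le_of_abs_le (abs_real_inner_le_norm p ξ))
  linarith

theorem exists_orthonormalBasis_eq_norm_smul {ι E : Type*} [Fintype ι] [NormedAddCommGroup E]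
    [InnerProductSpace ℝ E] [FiniteDimensional ℝ E] (hcard : Module.finrank ℝ E = Fintype.card ι)
    (i : ι) (ξ : E) : ∃ b : OrthonormalBasis ι ℝ E, ξ = ‖ξ‖ • b i := by
  rcases eq_or_ne ξ 0 with rfl | hξ
  · exact ⟨(stdOrthonormalBasis ℝ E).reindex (Fintype.equivOfCardEq (by simp [hcard])), by simp⟩
  · have hunit : ‖‖ξ‖⁻¹ • ξ‖ = 1 := norm_smul_inv_norm hξ
    obtain ⟨b, hb⟩ := Orthonormal.exists_orthonormalBasis_extension_of_card_eq (𝕜 := ℝ) hcard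
      (v := fun _ : ι => ‖ξ‖⁻¹ • ξ) (s := {i})
      ⟨fun _ => hunit, fun j k hjk => (hjk (Subsingleton.elim j k)).elim⟩
    exact ⟨b, by rw [hb i rfl, smul_inv_smul₀ (norm_ne_zero_iff.2 hξ)]⟩

variable {b : OrthonormalBasis (Fin 2) ℝ ℝ²} {ξ : ℝ²} {β : ℝ}

theorem pZero_sq_eq_repr (b : OrthonormalBasis (Fin 2) ℝ ℝ²) (p : ℝ²) :
    pZero p ^ 2 = 1 + (b.repr p 0 ^ 2 + b.repr p 1 ^ 2) := by
  rw [pZero_sq, ← b.repr.norm_map p, EuclideanSpace.real_norm_sq_eq, Fin.sum_univ_two]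

theorem abs_repr_zero_le_pZero (b : OrthonormalBasis (Fin 2) ℝ ℝ²) (p : ℝ²) :
    |b.repr p 0| ≤ pZero p :=
  abs_le_of_sq_le_sq (by linarith [pZero_sq_eq_repr b p, sq_nonneg (b.repr p 1)]) (pZero_pos p).le

theorem one_add_repr_sq_div_le (hb : ξ = ‖ξ‖ • b 0) (hξ : ‖ξ‖ ≤ 1) (p : ℝ²) :
    (1 + b.repr p 1 ^ 2) / (2 * pZero p) ≤ pZero p + ⟪p, ξ⟫ := by
  have hinner : ⟪p, ξ⟫ = ‖ξ‖ * b.repr p 0 := by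
    rw [hb, real_inner_smul_right, real_inner_comm, ← b.repr_apply_apply, ← hb]
  have habs : ‖ξ‖ * |b.repr p 0| ≤ |b.repr p 0| :=
    mul_le_of_le_one_left (abs_nonneg _) hξ
  have hlower : pZero p - |b.repr p 0| ≤ pZero p + ⟪p, ξ⟫ := by
    have := neg_abs_le (‖ξ‖ * b.repr p 0)
    rw [abs_mul, abs_norm] at this
    linarith
  have hfactor : 1 + b.repr p 1 ^ 2 = (pZero p - |b.repr p 0|) * (pZero p + |b.repr p 0|) := by
    linarith [pZero_sq_eq_repr b p, sq_abs (b.repr p 0)]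
  have hnonneg : 0 ≤ pZero p - |b.repr p 0| := sub_nonneg.2 (abs_repr_zero_le_pZero b p)
  rw [div_le_iff₀ (mul_pos two_pos (pZero_pos p)), hfactor]
  exact mul_le_mul hlower (by linarith) (by linarith [abs_nonneg (b.repr p 0)])
    (hnonneg.trans hlower)

theorem inv_kernel_le (hb : ξ = ‖ξ‖ • b 0) (hξ : ‖ξ‖ < 1) (hβ0 : 0 ≤ β) (hβ1 : β ≤ 1) (p : ℝ²) :
    (pZero p * (1 + ⟪pHat p, ξ⟫))⁻¹ ≤
      2 * (1 - ‖ξ‖) ^ (-β) * pZero p ^ (1 - 2 * β) * (1 + b.repr p 1 ^ 2) ^ (β - 1) := by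
  have hp := pZero_pos p
  have hδ : 0 < 1 - ‖ξ‖ := sub_pos.2 hξ
  have hv : 0 < 1 + b.repr p 1 ^ 2 := by positivity
  rw [pZero_mul_one_add_inner_pHat]
  set D := pZero p + ⟪p, ξ⟫
  have hlong : (1 - ‖ξ‖) * pZero p ≤ D := one_sub_norm_mul_pZero_le p ξ
  have hD : 0 < D := (by positivity : 0 < (1 - ‖ξ‖) * pZero p).trans_le hlong
  have hgeom : ((1 - ‖ξ‖) * pZero p) ^ β * ((1 + b.repr p 1 ^ 2) / (2 * pZero p)) ^ (1 - β) ≤ D :=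
    calc
      _ ≤ D ^ β * D ^ (1 - β) := by
        gcongr
        exact one_add_repr_sq_div_le hb hξ.le p
      _ = D := by rw [← Real.rpow_add hD, add_sub_cancel, Real.rpow_one]
  calc
    D⁻¹ ≤ (((1 - ‖ξ‖) * pZero p) ^ β * ((1 + b.repr p 1 ^ 2) / (2 * pZero p)) ^ (1 - β))⁻¹ :=
      inv_anti₀ (by positivity) hgeom
    _ = 2 ^ (1 - β) * (1 - ‖ξ‖) ^ (-β) * pZero p ^ (1 - 2 * β) *
        (1 + b.repr p 1 ^ 2) ^ (β - 1) := by
      rw [Real.mul_rpow hδ.le hp.le, Real.div_rpow hv.le (by positivity),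
        Real.mul_rpow zero_le_two hp.le, Real.rpow_neg hδ.le, ← neg_sub 1 β, Real.rpow_neg hv.le,
        show 1 - 2 * β = (1 - β) - β by ring, Real.rpow_sub hp (1 - β) β]
      field_simp
    _ ≤ _ := by
      gcongr
      exact Real.rpow_le_self_of_one_le one_le_two (by linarith)

end Kernel

section MomentumIntegral

/-- The integral over the momentum component transverse to `ξ` of the factor `(1 + v²)^(β - 1)`
in the bound `inv_kernel_le`. -/
noncomputable def transverseMass (β : ℝ) : ℝ≥0∞ :=
  ∫⁻ v : ℝ, ENNReal.ofReal ((1 + v ^ 2) ^ (β - 1))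

variable {b : OrthonormalBasis (Fin 2) ℝ ℝ²} {ξ : ℝ²} {β R : ℝ} {F : ℝ² → ℝ≥0∞} {C : ℝ≥0∞}

theorem transverseMass_ne_top (hβ : β < 1 / 2) : transverseMass β ≠ ∞ := by
  have hint : Integrable fun v : ℝ => (1 + ‖v‖ ^ 2) ^ (-(2 - 2 * β) / 2) :=
    integrable_rpow_neg_one_add_norm_sq (by
      rw [Module.finrank_self, Nat.cast_one]
      linarith)
  have hexp : -(2 - 2 * β) / 2 = β - 1 := by ring
  simp only [hexp, Real.norm_eq_abs, sq_abs] at hint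
  exact hint.lintegral_lt_top.ne

theorem setLIntegral_comp_repr_one (b : OrthonormalBasis (Fin 2) ℝ ℝ²) {w : ℝ → ℝ≥0∞}
    (hw : Measurable w) (R : ℝ) :
    ∫⁻ p in {p | |b.repr p 0| ≤ R}, w (b.repr p 1) = ENNReal.ofReal (2 * R) * ∫⁻ v, w v := by
  have hmp := b.measurePreserving_repr_symm.comp measurePreserving_euclideanPlane_mk
  have hset : MeasurableSet {p | |b.repr p 0| ≤ R} :=
    measurableSet_le (by fun_prop) measurable_const
  have hpre : (b.repr.symm ∘ fun z : ℝ × ℝ => !₂[z.1, z.2]) ⁻¹' {p | |b.repr p 0| ≤ R} =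
      Icc (-R) R ×ˢ univ := by
    ext z
    simp [abs_le]
  rw [← hmp.setLIntegral_comp_preimage hset (by fun_prop), hpre, Measure.volume_eq_prod,
    setLIntegral_prod _ (by fun_prop)]
  rw [two_mul]
  simp [mul_comm]

theorem setLIntegral_pZero_le_mul_inv_kernel_le (hb : ξ = ‖ξ‖ • b 0) (hξ : ‖ξ‖ < 1) (hβ0 : 0 ≤ β)
    (hβ : β ≤ 1 / 2) (hFC : ∀ᵐ p, F p ≤ C) (R : ℝ) :
    ∫⁻ p in {p | pZero p ≤ R}, F p * ENNReal.ofReal (pZero p * (1 + ⟪pHat p, ξ⟫))⁻¹ ≤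
      C * ENNReal.ofReal (2 * (1 - ‖ξ‖) ^ (-β) * R ^ (1 - 2 * β)) *
        (ENNReal.ofReal (2 * R) * transverseMass β) := by
  have : 0 < 1 - ‖ξ‖ := sub_pos.2 hξ
  have hset : MeasurableSet {p | pZero p ≤ R} := measurableSet_le measurable_pZero measurable_const
  have hweight : Measurable fun v : ℝ => ENNReal.ofReal ((1 + v ^ 2) ^ (β - 1)) := by fun_prop
  calc
    _ ≤ ∫⁻ p in {p | pZero p ≤ R}, C * ENNReal.ofReal (2 * (1 - ‖ξ‖) ^ (-β) * R ^ (1 - 2 * β)) *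
        ENNReal.ofReal ((1 + b.repr p 1 ^ 2) ^ (β - 1)) := by
      refine setLIntegral_mono_ae' hset (hFC.mono fun p hp hpR => ?_)
      have hpow : pZero p ^ (1 - 2 * β) ≤ R ^ (1 - 2 * β) :=
        Real.rpow_le_rpow (pZero_pos p).le hpR (by linarith)
      have hR : 0 ≤ R := (pZero_pos p).le.trans hpR
      rw [mul_assoc, ← ENNReal.ofReal_mul (by positivity)]
      gcongr
      exact (inv_kernel_le hb hξ hβ0 (by linarith) p).trans (by gcongr)
    _ ≤ ∫⁻ p in {p | |b.repr p 0| ≤ R}, C * ENNReal.ofReal (2 * (1 - ‖ξ‖) ^ (-β) *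
        R ^ (1 - 2 * β)) * ENNReal.ofReal ((1 + b.repr p 1 ^ 2) ^ (β - 1)) :=
      lintegral_mono_set fun p hp => (abs_repr_zero_le_pZero b p).trans hp
    _ = _ := by
      rw [lintegral_const_mul _ (by fun_prop), setLIntegral_comp_repr_one b hweight]
      rfl

theorem setLIntegral_lt_pZero_mul_inv_kernel_le (hξ : ‖ξ‖ < 1) (hβ0 : 0 ≤ β) (hβ : β ≤ 1)
    (hR : 0 < R) {n : ℕ} (hn : 1 - 2 * β ≤ n) (F : ℝ² → ℝ≥0∞) :
    ∫⁻ p in {p | pZero p ≤ R}ᶜ, F p * ENNReal.ofReal (pZero p * (1 + ⟪pHat p, ξ⟫))⁻¹ ≤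
      ENNReal.ofReal (2 * (1 - ‖ξ‖) ^ (-β) * R ^ (1 - 2 * β - n)) *
        ∫⁻ p, ENNReal.ofReal (pZero p ^ n) * F p := by
  obtain ⟨b, hb⟩ := exists_orthonormalBasis_eq_norm_smul (ι := Fin 2) (by simp) 0 ξ
  have : 0 < 1 - ‖ξ‖ := sub_pos.2 hξ
  rw [← lintegral_const_mul' _ _ ENNReal.ofReal_ne_top]
  refine le_trans ?_ (setLIntegral_le_lintegral {p | pZero p ≤ R}ᶜ _)
  have hset : MeasurableSet {p | pZero p ≤ R} := measurableSet_le measurable_pZero measurable_const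
  refine setLIntegral_mono' hset.compl fun p hp => ?_
  have hpR : R < pZero p := not_le.1 hp
  have hp0 := pZero_pos p
  have htransverse : (1 + b.repr p 1 ^ 2) ^ (β - 1) ≤ 1 :=
    Real.rpow_le_one_of_one_le_of_nonpos (by linarith [sq_nonneg (b.repr p 1)]) (by linarith)
  have hpow : pZero p ^ (1 - 2 * β) ≤ R ^ (1 - 2 * β - n) * pZero p ^ n :=
    calc
      _ = pZero p ^ (1 - 2 * β - n) * pZero p ^ n := by
        rw [← Real.rpow_natCast, ← Real.rpow_add hp0, sub_add_cancel]
      _ ≤ _ := by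
        gcongr ?_ * _
        exact Real.rpow_le_rpow_of_nonpos hR hpR.le (by linarith)
  rw [← mul_assoc, ← ENNReal.ofReal_mul (by positivity), mul_comm (F p)]
  gcongr
  calc
    _ ≤ 2 * (1 - ‖ξ‖) ^ (-β) * (R ^ (1 - 2 * β - n) * pZero p ^ n) * 1 :=
      (inv_kernel_le hb hξ hβ0 hβ p).trans (by gcongr)
    _ = _ := by ring

theorem le_rpow_div_of_forall_le {I A B m : ℝ≥0∞} {a c : ℝ} (ha : 0 < a) (hc : 0 < c) (hA : A ≠ ∞)
    (h : ∀ R : ℝ, 0 < R →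
      I ≤ A * ENNReal.ofReal R ^ a + B * ENNReal.ofReal R ^ (a - c) * m) :
    I ≤ (A + B) * m ^ (a / c) := by
  have hac : 0 < a / c := div_pos ha hc
  rcases eq_or_ne m 0 with rfl | hm0
  · have hlim : Filter.Tendsto (fun R => A * ENNReal.ofReal R ^ a) (nhdsWithin 0 (Ioi 0))
        (nhds 0) := by
      have hcont : Continuous fun R => A * ENNReal.ofReal R ^ a :=
        (ENNReal.continuous_const_mul hA).comp
          (ENNReal.continuous_rpow_const.comp ENNReal.continuous_ofReal)
      simpa [ENNReal.zero_rpow_of_pos ha] using (hcont.tendsto 0).mono_left nhdsWithin_le_nhds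
    rw [ENNReal.zero_rpow_of_pos hac, mul_zero]
    refine ge_of_tendsto hlim (Filter.eventually_of_mem self_mem_nhdsWithin fun R hR => ?_)
    simpa using h R hR
  rcases eq_or_ne m ∞ with rfl | hmtop
  · rcases eq_or_ne (A + B) 0 with hAB | hAB
    · obtain ⟨rfl, rfl⟩ := add_eq_zero.1 hAB
      simpa using h 1 one_pos
    · rw [ENNReal.top_rpow_of_pos hac, ENNReal.mul_top hAB]
      exact le_top
  · have hR0 : m ^ (1 / c) ≠ 0 := (ENNReal.rpow_pos (pos_iff_ne_zero.2 hm0) hmtop).ne'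
    have hRtop : m ^ (1 / c) ≠ ∞ := ENNReal.rpow_ne_top_of_nonneg (by positivity) hmtop
    have hopt := h (m ^ (1 / c)).toReal (ENNReal.toReal_pos hR0 hRtop)
    have hexp : m ^ ((a - c) / c) * m = m ^ (a / c) := by
      rw [sub_div, div_self hc.ne']
      nth_rw 2 [← ENNReal.rpow_one m]
      rw [← ENNReal.rpow_add _ _ hm0 hmtop, sub_add_cancel]
    rwa [ENNReal.ofReal_toReal hRtop, ← ENNReal.rpow_mul, ← ENNReal.rpow_mul, one_div_mul_eq_div,
      one_div_mul_eq_div, mul_assoc, hexp, ← add_mul] at hopt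

theorem lintegral_mul_inv_kernel_le (hξ : ‖ξ‖ < 1) (hβ0 : 0 ≤ β) (hβ : β < 1 / 2) (hC : C ≠ ∞)
    (hFC : ∀ᵐ p, F p ≤ C) {n : ℕ} (hn : 1 - 2 * β ≤ n) :
    ∫⁻ p, F p * ENNReal.ofReal (pZero p * (1 + ⟪pHat p, ξ⟫))⁻¹ ≤
      ENNReal.ofReal (2 * (1 - ‖ξ‖) ^ (-β)) * (2 * C * transverseMass β + 1) *
        (∫⁻ p, ENNReal.ofReal (pZero p ^ n) * F p) ^ ((2 - 2 * β) / (n + 1)) := by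
  obtain ⟨b, hb⟩ := exists_orthonormalBasis_eq_norm_smul (ι := Fin 2) (by simp) 0 ξ
  have : 0 < 1 - ‖ξ‖ := sub_pos.2 hξ
  have hmass := transverseMass_ne_top hβ
  rw [mul_add, mul_one]
  refine le_rpow_div_of_forall_le (by linarith) (by positivity) (by finiteness) fun R hR => ?_
  have hset : MeasurableSet {p | pZero p ≤ R} := measurableSet_le measurable_pZero measurable_const
  rw [← lintegral_add_compl _ hset]
  refine add_le_add
    ((setLIntegral_pZero_le_mul_inv_kernel_le hb hξ hβ0 hβ.le hFC R).trans_eq ?_)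
    ((setLIntegral_lt_pZero_mul_inv_kernel_le hξ hβ0 (by linarith) hR hn F).trans_eq ?_)
  · rw [ENNReal.ofReal_mul (by positivity), ENNReal.ofReal_mul (p := 2) (q := R) zero_le_two,
      ENNReal.ofReal_ofNat, ← ENNReal.ofReal_rpow_of_pos hR,
      show 2 - 2 * β = (1 - 2 * β) + 1 by ring,
      ENNReal.rpow_add _ _ (ENNReal.ofReal_pos.2 hR).ne' ENNReal.ofReal_ne_top, ENNReal.rpow_one]
    ring
  · rw [ENNReal.ofReal_mul (by positivity), ← ENNReal.ofReal_rpow_of_pos hR,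
      show 2 - 2 * β - (n + 1) = 1 - 2 * β - n by ring]

end MomentumIntegral

section Weights

variable {a c e r t β ε τ ρ : ℝ}

theorem setLIntegral_Ioc_rpow (hr : -1 < r) (hc : 0 ≤ c) :
    ∫⁻ e in Ioc 0 c, ENNReal.ofReal (e ^ r) = ENNReal.ofReal (c ^ (r + 1) / (r + 1)) := by
  rw [← ofReal_integral_eq_lintegral_ofReal, ← intervalIntegral.integral_of_le hc,
    integral_rpow (Or.inl hr), Real.zero_rpow (by linarith), sub_zero]
  · exact (intervalIntegrable_iff_integrableOn_Ioc_of_le hc).1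
      (intervalIntegral.intervalIntegrable_rpow' hr)
  · exact (ae_restrict_mem measurableSet_Ioc).mono fun e he => Real.rpow_nonneg he.1.le r

theorem setLIntegral_Ioi_rpow (hr : r < -1) (hc : 0 < c) :
    ∫⁻ e in Ioi c, ENNReal.ofReal (e ^ r) = ENNReal.ofReal (-c ^ (r + 1) / (r + 1)) := by
  rw [← ofReal_integral_eq_lintegral_ofReal, integral_Ioi_rpow_of_lt hr hc]
  · exact integrableOn_Ioi_rpow_of_lt hr hc
  · exact (ae_restrict_mem measurableSet_Ioi).mono fun e he => Real.rpow_nonneg (hc.trans he).le r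

theorem rpow_mul_min_rpow_le (ha : 0 ≤ a) (he : 0 < e) (hε : 0 < ε) (ht : 0 ≤ t) :
    e ^ (-1 - a) * min t (e / ε) ^ (2 * a) ≤ ε ^ (-(2 * a)) * e ^ (a - 1) :=
  calc
    _ ≤ e ^ (-1 - a) * (e / ε) ^ (2 * a) := by gcongr; exact min_le_right _ _
    _ = ε ^ (-(2 * a)) * (e ^ (-1 - a) * e ^ (2 * a)) := by
      rw [Real.div_rpow he.le hε.le, Real.rpow_neg hε.le]
      ring
    _ = _ := by rw [← Real.rpow_add he, show -1 - a + 2 * a = a - 1 by ring]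

theorem setLIntegral_Ioc_rpow_mul_min_rpow_le (ha : 0 < a) (hε : 0 < ε) (ht : 0 < t) :
    ∫⁻ e in Ioc 0 t, ENNReal.ofReal (e ^ (-1 - a) * min t (e / ε) ^ (2 * a)) ≤
      ENNReal.ofReal (2 / a * ε ^ (-a) * t ^ a) := by
  have hc : 0 < ε * t := by positivity
  have hsmall : ∀ e ∈ Ioc 0 (ε * t), ENNReal.ofReal (e ^ (-1 - a) * min t (e / ε) ^ (2 * a)) ≤
      ENNReal.ofReal (ε ^ (-(2 * a))) * ENNReal.ofReal (e ^ (a - 1)) := fun e he => by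
    rw [← ENNReal.ofReal_mul (by positivity)]
    exact ENNReal.ofReal_le_ofReal (rpow_mul_min_rpow_le ha.le he.1 hε ht.le)
  have hlarge : ∀ e ∈ Ioi (ε * t), ENNReal.ofReal (e ^ (-1 - a) * min t (e / ε) ^ (2 * a)) ≤
      ENNReal.ofReal (t ^ (2 * a)) * ENNReal.ofReal (e ^ (-1 - a)) := fun e he => by
    have he0 : 0 < e := hc.trans he
    rw [← ENNReal.ofReal_mul (by positivity), mul_comm]
    gcongr
    exact min_le_left _ _
  have hcover : Ioc 0 t ⊆ Ioc 0 (ε * t) ∪ Ioi (ε * t) := by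
    rw [Ioc_union_Ioi_eq_Ioi hc.le]
    exact Ioc_subset_Ioi_self
  refine (lintegral_mono_set hcover).trans ((lintegral_union_le _ _ _).trans
    ((add_le_add (setLIntegral_mono' measurableSet_Ioc hsmall)
      (setLIntegral_mono' measurableSet_Ioi hlarge)).trans_eq ?_))
  rw [lintegral_const_mul' _ _ ENNReal.ofReal_ne_top,
    lintegral_const_mul' _ _ ENNReal.ofReal_ne_top,
    setLIntegral_Ioc_rpow (by linarith) hc.le, setLIntegral_Ioi_rpow (by linarith) hc,
    ← ENNReal.ofReal_mul (by positivity), sub_add_cancel, show -1 - a + 1 = -a by ring,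
    neg_div_neg_eq, ← ENNReal.ofReal_mul (by positivity),
    ← ENNReal.ofReal_add (by positivity) (by positivity), Real.mul_rpow hε.le ht.le,
    Real.mul_rpow hε.le ht.le, mul_div_assoc, mul_div_assoc]
  congr 1
  have hεa : ε ^ (-(2 * a)) * ε ^ a = ε ^ (-a) := by rw [← Real.rpow_add hε]; ring_nf
  have hta : t ^ (2 * a) * t ^ (-a) = t ^ a := by rw [← Real.rpow_add ht]; ring_nf
  linear_combination t ^ a / a * hεa + ε ^ (-a) / a * hta

theorem setLIntegral_backwardCone_comp_coneDepth_le {g : ℝ × ℝ → ℝ≥0∞} (hg : Measurable g)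
    (t : ℝ) (x : ℝ²) :
    ∫⁻ z in backwardCone t x, g (t - z.1, coneDepth t x z) ≤
      ∫⁻ τ in Ioc 0 t, ENNReal.ofReal (2 * Real.pi * τ) * ∫⁻ e in Ioc 0 τ, g (τ, e) := by
  rw [setLIntegral_backwardCone (by fun_prop), ← setLIntegral_Ioc_comp_const_sub fun τ => _ * _]
  exact lintegral_mono fun s =>
    setLIntegral_closedBall_comp_sub_dist_le (hg.comp measurable_prodMk_left) x (t - s)

theorem inv_sqrt_mul_rpow_le (he : 0 < e) (hτ : 0 < τ) (hρ : τ ≤ ρ) (β : ℝ) :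
    (√(e * ρ))⁻¹ * (e / τ) ^ (-β) ≤
      (√(e * ρ))⁻¹ ^ (2 / 5 : ℝ) * (e ^ (-(3 / 10) - β) * τ ^ (β - 3 / 10)) := by
  have hS : 0 < √(e * ρ) := Real.sqrt_pos.2 (mul_pos he (hτ.trans_le hρ))
  have hsplit : (√(e * ρ))⁻¹ = (√(e * ρ))⁻¹ ^ (2 / 5 : ℝ) * (√(e * ρ))⁻¹ ^ (3 / 5 : ℝ) := by
    rw [← Real.rpow_add (by positivity)]
    norm_num
  have hpow : (√(e * ρ))⁻¹ ^ (3 / 5 : ℝ) ≤ (e * τ) ^ (-(3 / 10) : ℝ) :=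
    calc
      _ ≤ (√(e * τ))⁻¹ ^ (3 / 5 : ℝ) := by gcongr
      _ = _ := by
        rw [Real.sqrt_eq_rpow, ← Real.rpow_neg (by positivity), ← Real.rpow_mul (by positivity)]
        norm_num
  calc
    _ = (√(e * ρ))⁻¹ ^ (2 / 5 : ℝ) * ((√(e * ρ))⁻¹ ^ (3 / 5 : ℝ) * (e / τ) ^ (-β)) := by
      rw [← mul_assoc, ← hsplit]
    _ ≤ (√(e * ρ))⁻¹ ^ (2 / 5 : ℝ) * ((e * τ) ^ (-(3 / 10) : ℝ) * (e / τ) ^ (-β)) := by gcongr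
    _ = _ := by
      rw [Real.mul_rpow he.le hτ.le, Real.div_rpow he.le hτ.le, Real.rpow_neg hτ.le β,
        div_inv_eq_mul, mul_mul_mul_comm, ← Real.rpow_add he, ← Real.rpow_add hτ]
      ring_nf

theorem setLIntegral_Ioc_indicator_Iic_le {b : ℝ} (hr : -1 < r) (hc : 0 ≤ c) :
    ∫⁻ e in Ioc 0 b, (Iic c).indicator (fun e => ENNReal.ofReal (e ^ r)) e ≤
      ENNReal.ofReal (c ^ (r + 1) / (r + 1)) := by
  rw [setLIntegral_indicator measurableSet_Iic, ← setLIntegral_Ioc_rpow hr hc]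
  exact lintegral_mono_set fun e he => ⟨he.2.1, he.1⟩

theorem setLIntegral_Ioc_indicator_Ici_le {b : ℝ} (hr : r < -1) (hc : 0 < c) :
    ∫⁻ e in Ioc 0 b, (Ici c).indicator (fun e => ENNReal.ofReal (e ^ r)) e ≤
      ENNReal.ofReal (-c ^ (r + 1) / (r + 1)) := by
  rw [← setLIntegral_Ioi_rpow hr hc, setLIntegral_congr Ioi_ae_eq_Ici,
    ← lintegral_indicator measurableSet_Ici]
  exact setLIntegral_le_lintegral _ _

theorem setLIntegral_backwardCone_indicator_Ici_le (hr3 : -3 < r) (hr1 : r < -1) (hε : 0 < ε)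
    (ht : 0 ≤ t) (x : ℝ²) :
    ∫⁻ z in backwardCone t x, (Ici (ε * (t - z.1))).indicator
        (fun e => ENNReal.ofReal (e ^ r)) (coneDepth t x z) ≤
      ENNReal.ofReal (2 * Real.pi / (-(r + 1) * (r + 3)) * ε ^ (r + 1) * t ^ (r + 3)) := by
  have hr : 0 < -(r + 1) := by linarith
  have hset : MeasurableSet {w : ℝ × ℝ | ε * w.1 ≤ w.2} :=
    measurableSet_le (by fun_prop) (by fun_prop)
  have hweight : Measurable fun w : ℝ × ℝ => ENNReal.ofReal (w.2 ^ r) := by fun_prop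
  refine (setLIntegral_backwardCone_comp_coneDepth_le (hweight.indicator hset) t x).trans ?_
  calc
    _ ≤ ∫⁻ τ in Ioc 0 t, ENNReal.ofReal (2 * Real.pi / -(r + 1) * ε ^ (r + 1)) *
        ENNReal.ofReal (τ ^ (r + 2)) := by
      refine setLIntegral_mono' measurableSet_Ioc fun τ hτ => ?_
      have hτ0 : 0 < τ := hτ.1
      refine (mul_le_mul_right (setLIntegral_Ioc_indicator_Ici_le hr1 (mul_pos hε hτ0)) _).trans_eq
        ?_
      rw [← ENNReal.ofReal_mul (by positivity), ← ENNReal.ofReal_mul (by positivity),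
        show r + 2 = 1 + (r + 1) by ring, Real.rpow_add hτ0, Real.rpow_one,
        Real.mul_rpow hε.le hτ0.le]
      congr 1
      field_simp
    _ = _ := by
      rw [lintegral_const_mul' _ _ ENNReal.ofReal_ne_top, setLIntegral_Ioc_rpow (by linarith) ht,
        ← ENNReal.ofReal_mul (by positivity), show r + 2 + 1 = r + 3 by ring]
      congr 1
      field_simp

theorem setLIntegral_backwardCone_indicator_Iic_le (hr : -1 < r) (hε : 0 ≤ ε) (t : ℝ)
    (x : ℝ²) :
    ∫⁻ z in backwardCone t x, ENNReal.ofReal ((t - z.1) ^ (-(r + 2))) *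
        (Iic (ε * (t - z.1))).indicator (fun e => ENNReal.ofReal (e ^ r)) (coneDepth t x z) ≤
      ENNReal.ofReal (2 * Real.pi / (r + 1) * ε ^ (r + 1) * t) := by
  have hr0 : 0 < r + 1 := by linarith
  have hset : MeasurableSet {w : ℝ × ℝ | w.2 ≤ ε * w.1} :=
    measurableSet_le (by fun_prop) (by fun_prop)
  have hweight : Measurable fun w : ℝ × ℝ => ENNReal.ofReal (w.2 ^ r) := by fun_prop
  have hscale : Measurable fun w : ℝ × ℝ => ENNReal.ofReal (w.1 ^ (-(r + 2))) := by fun_prop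
  refine (setLIntegral_backwardCone_comp_coneDepth_le (hscale.mul (hweight.indicator hset)) t
    x).trans ?_
  calc
    _ ≤ ∫⁻ _ in Ioc 0 t, ENNReal.ofReal (2 * Real.pi / (r + 1) * ε ^ (r + 1)) := by
      refine setLIntegral_mono' measurableSet_Ioc fun τ hτ => ?_
      have hτ0 : 0 < τ := hτ.1
      simp only [Pi.mul_apply]
      rw [lintegral_const_mul' _ _ ENNReal.ofReal_ne_top]
      refine (mul_le_mul_right (mul_le_mul_right
        (setLIntegral_Ioc_indicator_Iic_le hr (mul_nonneg hε hτ0.le)) _) _).trans_eq ?_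
      rw [← ENNReal.ofReal_mul (by positivity), ← ENNReal.ofReal_mul (by positivity),
        Real.rpow_neg hτ0.le, show r + 2 = 1 + (r + 1) by ring, Real.rpow_add hτ0, Real.rpow_one,
        Real.mul_rpow hε hτ0.le]
      congr 1
      field_simp
    _ = _ := by
      rw [setLIntegral_const, Real.volume_Ioc, sub_zero, ← ENNReal.ofReal_mul (by positivity)]

end Weights

section ConeEstimate

variable {t C₀ Cf β : ℝ} {x : ℝ²} {Kg : ℝ → ℝ² → ℝ} {f : ℝ → ℝ² → ℝ² → ℝ}

/-- The integrand, in `(s, y)`, of the Glassey–Schaeffer term `K_{S,2}`. -/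
noncomputable def scatteringDensity (Kg : ℝ → ℝ² → ℝ) (f : ℝ → ℝ² → ℝ² → ℝ) (t : ℝ) (x : ℝ²)
    (z : ℝ × ℝ²) : ℝ≥0∞ :=
  ∫⁻ p, ENNReal.ofReal (Kg z.1 z.2 * f z.1 z.2 p /
    (pZero p * (1 + ⟪pHat p, (t - z.1)⁻¹ • (z.2 - x)⟫) * √((t - z.1) ^ 2 - dist z.2 x ^ 2)))

/-- The momentum moment `∫ p₀ⁿ f dp` divided by the weight `√((t - s)² - |y - x|²)` of the cone. -/
noncomputable def weightedMoment (f : ℝ → ℝ² → ℝ² → ℝ) (n : ℕ) (t : ℝ) (x : ℝ²) (z : ℝ × ℝ²) :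
    ℝ≥0∞ :=
  (∫⁻ p, ENNReal.ofReal (pZero p ^ n * f z.1 z.2 p)) /
    ENNReal.ofReal √((t - z.1) ^ 2 - dist z.2 x ^ 2)

theorem measurable_scatteringDensity (hK : Measurable (Function.uncurry Kg))
    (hf : Measurable fun z : ℝ × ℝ² × ℝ² => f z.1 z.2.1 z.2.2) :
    Measurable (scatteringDensity Kg f t x) := by
  have : Measurable fun w : (ℝ × ℝ²) × ℝ² => f w.1.1 w.1.2 w.2 :=
    hf.comp MeasurableEquiv.prodAssoc.measurable
  have : Measurable fun w : (ℝ × ℝ²) × ℝ² => Kg w.1.1 w.1.2 := hK.comp measurable_fst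
  have hpHat : Measurable pHat := by unfold pHat; fun_prop
  have : Measurable fun w : (ℝ × ℝ²) × ℝ² =>
      ⟪pHat w.2, (t - w.1.1)⁻¹ • (w.1.2 - x)⟫ := Measurable.inner (by fun_prop) (by fun_prop)
  exact Measurable.lintegral_prod_right' (f := fun w : (ℝ × ℝ²) × ℝ² => ENNReal.ofReal
    (Kg w.1.1 w.1.2 * f w.1.1 w.1.2 w.2 / (pZero w.2 *
      (1 + ⟪pHat w.2, (t - w.1.1)⁻¹ • (w.1.2 - x)⟫) * √((t - w.1.1) ^ 2 - dist w.1.2 x ^ 2))))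
    (by fun_prop)

theorem measurable_weightedMoment (hf : Measurable fun z : ℝ × ℝ² × ℝ² => f z.1 z.2.1 z.2.2)
    (n : ℕ) : Measurable (weightedMoment f n t x) := by
  have : Measurable fun w : (ℝ × ℝ²) × ℝ² => f w.1.1 w.1.2 w.2 :=
    hf.comp MeasurableEquiv.prodAssoc.measurable
  exact (Measurable.lintegral_prod_right' (f := fun w : (ℝ × ℝ²) × ℝ² =>
    ENNReal.ofReal (pZero w.2 ^ n * f w.1.1 w.1.2 w.2)) (by fun_prop)).div (by fun_prop)

theorem sq_sub_sq_dist_eq (t : ℝ) (x : ℝ²) (z : ℝ × ℝ²) :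
    (t - z.1) ^ 2 - dist z.2 x ^ 2 = coneDepth t x z * (t - z.1 + dist z.2 x) := by
  rw [coneDepth]
  ring

theorem one_sub_norm_inv_smul_sub {z : ℝ × ℝ²} (hz : 0 < t - z.1) :
    1 - ‖(t - z.1)⁻¹ • (z.2 - x)‖ = coneDepth t x z / (t - z.1) := by
  rw [norm_smul_of_nonneg (by positivity), ← dist_eq_norm, coneDepth]
  field_simp

theorem scatteringDensity_eq_zero {z : ℝ × ℝ²} (hz : coneDepth t x z = 0) :
    scatteringDensity Kg f t x z = 0 := by
  simp [scatteringDensity, sq_sub_sq_dist_eq, hz]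

theorem scatteringDensity_eq {z : ℝ × ℝ²} (hK : 0 ≤ Kg z.1 z.2)
    (hξ : ‖(t - z.1)⁻¹ • (z.2 - x)‖ ≤ 1) :
    scatteringDensity Kg f t x z =
      ENNReal.ofReal (Kg z.1 z.2) * ENNReal.ofReal (√((t - z.1) ^ 2 - dist z.2 x ^ 2))⁻¹ *
        ∫⁻ p, ENNReal.ofReal (f z.1 z.2 p) *
          ENNReal.ofReal (pZero p * (1 + ⟪pHat p, (t - z.1)⁻¹ • (z.2 - x)⟫))⁻¹ := by
  rw [scatteringDensity, ← ENNReal.ofReal_mul hK, ← lintegral_const_mul' _ _ ENNReal.ofReal_ne_top]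
  refine lintegral_congr fun p => ?_
  have hkernel : 0 ≤ pZero p * (1 + ⟪pHat p, (t - z.1)⁻¹ • (z.2 - x)⟫) := by
    rw [pZero_mul_one_add_inner_pHat]
    exact (mul_nonneg (sub_nonneg.2 hξ) (pZero_pos p).le).trans (one_sub_norm_mul_pZero_le p _)
  rw [← ENNReal.ofReal_mul' (by positivity), ← ENNReal.ofReal_mul (by positivity)]
  congr 1
  rw [div_eq_mul_inv, mul_inv]
  ring

theorem weightedMoment_rpow {z : ℝ × ℝ²} (hz : 0 < (t - z.1) ^ 2 - dist z.2 x ^ 2) (n : ℕ) {r : ℝ}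
    (hr : 0 ≤ r) :
    weightedMoment f n t x z ^ r =
      (∫⁻ p, ENNReal.ofReal (pZero p ^ n) * ENNReal.ofReal (f z.1 z.2 p)) ^ r *
        ENNReal.ofReal ((√((t - z.1) ^ 2 - dist z.2 x ^ 2))⁻¹ ^ r) := by
  have hp0 : ∀ p, 0 ≤ pZero p ^ n := fun p => pow_nonneg (pZero_pos p).le n
  rw [weightedMoment, div_eq_mul_inv, ENNReal.mul_rpow_of_nonneg _ _ hr,
    ← ENNReal.ofReal_inv_of_pos (Real.sqrt_pos.2 hz),
    ENNReal.ofReal_rpow_of_nonneg (by positivity) hr]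
  simp only [ENNReal.ofReal_mul (hp0 _)]

/-- The constant of `scatteringDensity_le`, for `f ≤ C₀` and interpolation parameter `β`. -/
noncomputable def scatteringConst (C₀ β : ℝ) : ℝ≥0∞ :=
  2 * (2 * ENNReal.ofReal C₀ * transverseMass β + 1)

/-- What remains of the weight of the cone integrand once the momentum integral is interpolated with
parameter `β` and the factor absorbed by the weighted moment is split off; here `e` stands for the
depth `t - s - |y - x|` and `τ` for `t - s`. -/
noncomputable def residualWeight (β e τ : ℝ) : ℝ≥0∞ :=
  ENNReal.ofReal (e ^ (-(3 / 10) - β) * τ ^ (β - 3 / 10))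

theorem scatteringDensity_le {z : ℝ × ℝ²} (hdepth : 0 < coneDepth t x z) (hK : 0 ≤ Kg z.1 z.2)
    (hfC : ∀ᵐ p, f z.1 z.2 p ≤ C₀) (hβ0 : 0 ≤ β) (hβ : β < 1 / 2) {n : ℕ} (hn : n = 4 - 5 * β) :
    scatteringDensity Kg f t x z ≤ scatteringConst C₀ β *
      (ENNReal.ofReal (Kg z.1 z.2) * weightedMoment f n t x z ^ (2 / 5 : ℝ) *
        residualWeight β (coneDepth t x z) (t - z.1)) := by
  have hdist : 0 ≤ dist z.2 x := dist_nonneg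
  have hτ : 0 < t - z.1 := hdist.trans_lt (sub_pos.1 hdepth)
  have hnorm := one_sub_norm_inv_smul_sub (x := x) hτ
  have hξ : ‖(t - z.1)⁻¹ • (z.2 - x)‖ < 1 := sub_pos.1 (hnorm ▸ div_pos hdepth hτ)
  have hmomentum := lintegral_mul_inv_kernel_le hξ hβ0 hβ ENNReal.ofReal_ne_top
    (hfC.mono fun p hp => ENNReal.ofReal_le_ofReal hp) (n := n) (by linarith)
  have hexp : (2 - 2 * β) / (n + 1) = 2 / 5 := by
    rw [hn, div_eq_div_iff] <;> linarith
  have hweight := inv_sqrt_mul_rpow_le hdepth hτ (le_add_of_nonneg_right hdist) β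
  rw [← sq_sub_sq_dist_eq] at hweight
  have hsq : 0 < (t - z.1) ^ 2 - dist z.2 x ^ 2 := by
    rw [sq_sub_sq_dist_eq]
    positivity
  rw [hexp, hnorm] at hmomentum
  rw [scatteringDensity_eq hK hξ.le, weightedMoment_rpow hsq n (by norm_num), scatteringConst,
    residualWeight]
  set M := ∫⁻ p, ENNReal.ofReal (pZero p ^ n) * ENNReal.ofReal (f z.1 z.2 p)
  set S := √((t - z.1) ^ 2 - dist z.2 x ^ 2)
  set B := 2 * ENNReal.ofReal C₀ * transverseMass β + 1
  calc
    _ ≤ ENNReal.ofReal (Kg z.1 z.2) * ENNReal.ofReal S⁻¹ *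
        (ENNReal.ofReal (2 * (coneDepth t x z / (t - z.1)) ^ (-β)) * B * M ^ (2 / 5 : ℝ)) := by
      gcongr
    _ = 2 * B * (ENNReal.ofReal (Kg z.1 z.2) * M ^ (2 / 5 : ℝ) *
        ENNReal.ofReal (S⁻¹ * (coneDepth t x z / (t - z.1)) ^ (-β))) := by
      rw [ENNReal.ofReal_mul zero_le_two, ENNReal.ofReal_mul (p := S⁻¹) (by positivity),
        ENNReal.ofReal_ofNat]
      ring
    _ ≤ 2 * B * (ENNReal.ofReal (Kg z.1 z.2) * M ^ (2 / 5 : ℝ) *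
        ENNReal.ofReal (S⁻¹ ^ (2 / 5 : ℝ) *
          (coneDepth t x z ^ (-(3 / 10) - β) * (t - z.1) ^ (β - 3 / 10)))) := by gcongr
    _ = _ := by
      rw [ENNReal.ofReal_mul (by positivity)]
      ring

theorem scatteringDensity_le_of_weight_le {z : ℝ × ℝ²} {w v : ℝ≥0∞} (hz : 0 ≤ coneDepth t x z)
    (hK : 0 ≤ Kg z.1 z.2) (hfC : ∀ᵐ p, f z.1 z.2 p ≤ C₀) (hβ0 : 0 ≤ β) (hβ : β < 1 / 2) {n : ℕ}
    (hn : n = 4 - 5 * β)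
    (hwv : 0 < coneDepth t x z →
      residualWeight β (coneDepth t x z) (t - z.1) ≤
        w ^ (1 / 2 : ℝ) * v ^ (1 / 10 : ℝ)) :
    scatteringDensity Kg f t x z ≤ scatteringConst C₀ β *
      ((ENNReal.ofReal (Kg z.1 z.2 ^ 2) * w) ^ (1 / 2 : ℝ) *
        weightedMoment f n t x z ^ (2 / 5 : ℝ) * v ^ (1 / 10 : ℝ)) := by
  rcases hz.eq_or_lt with hdepth | hdepth
  · simp [scatteringDensity_eq_zero hdepth.symm]
  have hsqrt : ENNReal.ofReal (Kg z.1 z.2) = ENNReal.ofReal (Kg z.1 z.2 ^ 2) ^ (1 / 2 : ℝ) := by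
    rw [ENNReal.ofReal_rpow_of_nonneg (sq_nonneg _) (by norm_num), ← Real.sqrt_eq_rpow,
      Real.sqrt_sq hK]
  refine (scatteringDensity_le hdepth hK hfC hβ0 hβ hn).trans ?_
  gcongr _ * ?_
  calc
    _ ≤ ENNReal.ofReal (Kg z.1 z.2) * weightedMoment f n t x z ^ (2 / 5 : ℝ) *
        (w ^ (1 / 2 : ℝ) * v ^ (1 / 10 : ℝ)) := by
      gcongr
      exact hwv hdepth
    _ = _ := by
      rw [hsqrt, ENNReal.mul_rpow_of_nonneg _ _ (by norm_num)]
      ring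

theorem lintegral_rpow_mul_rpow_mul_rpow_le {α : Type*} [MeasurableSpace α] {μ : Measure α}
    {F G H : α → ℝ≥0∞} (hF : AEMeasurable F μ) (hG : AEMeasurable G μ) (hH : AEMeasurable H μ)
    {a b c : ℝ} (ha : 0 ≤ a) (hb : 0 ≤ b) (hc : 0 ≤ c) (habc : a + b + c = 1) :
    ∫⁻ z, F z ^ a * G z ^ b * H z ^ c ∂μ ≤
      (∫⁻ z, F z ∂μ) ^ a * (∫⁻ z, G z ∂μ) ^ b * (∫⁻ z, H z ∂μ) ^ c := by
  have h := ENNReal.lintegral_prod_norm_pow_le (μ := μ) (Finset.univ : Finset (Fin 3))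
    (f := ![F, G, H]) (p := ![a, b, c]) (by simp [Fin.forall_fin_succ, hF, hG, hH])
    (by simpa [Fin.sum_univ_three] using habc) (by simp [Fin.forall_fin_succ, ha, hb, hc])
  simpa [Fin.prod_univ_three] using h

theorem setLIntegral_scatteringDensity_le (hK : Measurable (Function.uncurry Kg))
    (hK0 : ∀ s y, 0 ≤ Kg s y) (hflux : ∀ a ∈ Ioc 0 t, coneFlux Kg a x ≤ ENNReal.ofReal Cf)
    (hf : Measurable fun z : ℝ × ℝ² × ℝ² => f z.1 z.2.1 z.2.2)
    (hfC : ∀ᵐ z : ℝ × ℝ² × ℝ², f z.1 z.2.1 z.2.2 ≤ C₀)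
    (hβ0 : 0 ≤ β) (hβ : β < 1 / 2) {n : ℕ} (hn : n = 4 - 5 * β) {P : Set (ℝ × ℝ²)}
    (hP : MeasurableSet P) (hPcone : P ⊆ backwardCone t x) {W : ℝ → ℝ≥0∞} (hW : Measurable W)
    {V : ℝ × ℝ² → ℝ≥0∞} (hV : Measurable V)
    (hWV : ∀ z ∈ P, 0 < coneDepth t x z →
      residualWeight β (coneDepth t x z) (t - z.1) ≤
        W (coneDepth t x z) ^ (1 / 2 : ℝ) * V z ^ (1 / 10 : ℝ)) :
    ∫⁻ z in P, scatteringDensity Kg f t x z ≤ scatteringConst C₀ β *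
      ((ENNReal.ofReal Cf * ∫⁻ e in Ioc 0 t, W e) ^ (1 / 2 : ℝ) *
        (∫⁻ z in backwardCone t x, weightedMoment f n t x z) ^ (2 / 5 : ℝ) *
          (∫⁻ z in backwardCone t x, V z) ^ (1 / 10 : ℝ)) := by
  have hfC' : ∀ᵐ z : ℝ × ℝ², ∀ᵐ p, f z.1 z.2 p ≤ C₀ := Measure.ae_ae_of_ae_prod
    ((volume_preserving_prodAssoc (α₁ := ℝ) (β₁ := ℝ²) (γ₁ := ℝ²)).quasiMeasurePreserving.ae hfC)
  have hM := measurable_weightedMoment (t := t) (x := x) hf n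
  have hK' : Measurable fun z : ℝ × ℝ² => Kg z.1 z.2 := hK
  have hKW : Measurable fun z : ℝ × ℝ² =>
      ENNReal.ofReal (Kg z.1 z.2 ^ 2) * W (coneDepth t x z) := by fun_prop
  calc
    _ ≤ ∫⁻ z in P, scatteringConst C₀ β *
        ((ENNReal.ofReal (Kg z.1 z.2 ^ 2) * W (coneDepth t x z)) ^ (1 / 2 : ℝ) *
          weightedMoment f n t x z ^ (2 / 5 : ℝ) * V z ^ (1 / 10 : ℝ)) :=
      setLIntegral_mono_ae' hP (hfC'.mono fun z hfz hz =>
        scatteringDensity_le_of_weight_le (sub_nonneg.2 (hPcone hz).2) (hK0 _ _) hfz hβ0 hβ hn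
          (hWV z hz))
    _ ≤ scatteringConst C₀ β *
        ((∫⁻ z in P, ENNReal.ofReal (Kg z.1 z.2 ^ 2) * W (coneDepth t x z)) ^ (1 / 2 : ℝ) *
          (∫⁻ z in P, weightedMoment f n t x z) ^ (2 / 5 : ℝ) *
            (∫⁻ z in P, V z) ^ (1 / 10 : ℝ)) := by
      rw [lintegral_const_mul _ (by fun_prop)]
      gcongr
      exact lintegral_rpow_mul_rpow_mul_rpow_le hKW.aemeasurable hM.aemeasurable hV.aemeasurable
        (by norm_num) (by norm_num) (by norm_num) (by norm_num)
    _ ≤ _ := by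
      gcongr
      exact (lintegral_mono_set hPcone).trans
        (setLIntegral_backwardCone_mul_comp_coneDepth_le hK hW hflux)

theorem scatteringConst_ne_top (hβ : β < 1 / 2) : scatteringConst C₀ β ≠ ∞ := by
  have := transverseMass_ne_top hβ
  unfold scatteringConst
  finiteness

/-- The constant of `setLIntegral_scatteringDensity_le_of_weights`: `A` and `B` are the constants in
the bounds for the integrals of `W` and `V`. -/
noncomputable def regionConst (C₀ Cf β A B : ℝ) : ℝ≥0∞ :=
  scatteringConst C₀ β * ENNReal.ofReal (Cf * A) ^ (1 / 2 : ℝ) * ENNReal.ofReal B ^ (1 / 10 : ℝ)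

theorem regionConst_ne_top {A B : ℝ} (hβ : β < 1 / 2) : regionConst C₀ Cf β A B ≠ ∞ := by
  have := scatteringConst_ne_top (C₀ := C₀) hβ
  unfold regionConst
  finiteness

theorem regionConst_pos {A B : ℝ} (hCf : 0 < Cf) (hA : 0 < A) (hB : 0 < B) :
    0 < regionConst C₀ Cf β A B := by
  have hconst : 0 < scatteringConst C₀ β := by
    unfold scatteringConst
    positivity
  have hpow : ∀ {u r : ℝ}, 0 < u → 0 < ENNReal.ofReal u ^ r := fun hu =>
    ENNReal.rpow_pos (ENNReal.ofReal_pos.2 hu) ENNReal.ofReal_ne_top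
  exact ENNReal.mul_pos (ENNReal.mul_pos hconst.ne' (hpow (mul_pos hCf hA)).ne').ne' (hpow hB).ne'

theorem ofReal_mul_rpow_mul_rpow_rpow {A ε : ℝ} (hA : 0 ≤ A) (hε : 0 < ε) (ht : 0 < t) (a b : ℝ)
    {r : ℝ} (hr : 0 ≤ r) :
    ENNReal.ofReal (A * ε ^ a * t ^ b) ^ r =
      ENNReal.ofReal A ^ r * (ENNReal.ofReal ε ^ (a * r) * ENNReal.ofReal t ^ (b * r)) := by
  rw [ENNReal.ofReal_mul (by positivity), ENNReal.ofReal_mul hA, ENNReal.mul_rpow_of_nonneg _ _ hr,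
    ENNReal.mul_rpow_of_nonneg _ _ hr, ← ENNReal.ofReal_rpow_of_pos hε,
    ← ENNReal.ofReal_rpow_of_pos ht, ← ENNReal.rpow_mul, ← ENNReal.rpow_mul, mul_assoc]

theorem setLIntegral_scatteringDensity_le_of_weights (hK : Measurable (Function.uncurry Kg))
    (hK0 : ∀ s y, 0 ≤ Kg s y) (hCf : 0 ≤ Cf)
    (hflux : ∀ a ∈ Ioc 0 t, coneFlux Kg a x ≤ ENNReal.ofReal Cf)
    (hf : Measurable fun z : ℝ × ℝ² × ℝ² => f z.1 z.2.1 z.2.2)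
    (hfC : ∀ᵐ z : ℝ × ℝ² × ℝ², f z.1 z.2.1 z.2.2 ≤ C₀)
    (hβ0 : 0 ≤ β) (hβ : β < 1 / 2) {n : ℕ} (hn : n = 4 - 5 * β) {P : Set (ℝ × ℝ²)}
    (hP : MeasurableSet P) (hPcone : P ⊆ backwardCone t x) {W : ℝ → ℝ≥0∞} (hW : Measurable W)
    {V : ℝ × ℝ² → ℝ≥0∞} (hV : Measurable V)
    (hWV : ∀ z ∈ P, 0 < coneDepth t x z →
      residualWeight β (coneDepth t x z) (t - z.1) ≤
        W (coneDepth t x z) ^ (1 / 2 : ℝ) * V z ^ (1 / 10 : ℝ))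
    {A B ε a b a' b' : ℝ} (hA : 0 ≤ A) (hB : 0 ≤ B) (hε : 0 < ε) (ht : 0 < t)
    (hWint : ∫⁻ e in Ioc 0 t, W e ≤ ENNReal.ofReal (A * ε ^ a * t ^ b))
    (hVint : ∫⁻ z in backwardCone t x, V z ≤ ENNReal.ofReal (B * ε ^ a' * t ^ b')) :
    ∫⁻ z in P, scatteringDensity Kg f t x z ≤ regionConst C₀ Cf β A B *
      ENNReal.ofReal t ^ (b / 2 + b' / 10) * (ENNReal.ofReal ε ^ (a / 2 + a' / 10) *
        (∫⁻ z in backwardCone t x, weightedMoment f n t x z) ^ (2 / 5 : ℝ)) := by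
  have hε0 : ENNReal.ofReal ε ≠ 0 := (ENNReal.ofReal_pos.2 hε).ne'
  have ht0 : ENNReal.ofReal t ≠ 0 := (ENNReal.ofReal_pos.2 ht).ne'
  have hW' : ENNReal.ofReal Cf * ∫⁻ e in Ioc 0 t, W e ≤
      ENNReal.ofReal (Cf * A * ε ^ a * t ^ b) := by
    rw [mul_assoc, mul_assoc, ENNReal.ofReal_mul hCf, ← mul_assoc A]
    gcongr
  refine (setLIntegral_scatteringDensity_le hK hK0 hflux hf hfC hβ0 hβ hn hP hPcone hW hV
    hWV).trans ?_
  set M := ∫⁻ z in backwardCone t x, weightedMoment f n t x z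
  calc
    _ ≤ scatteringConst C₀ β * (ENNReal.ofReal (Cf * A * ε ^ a * t ^ b) ^ (1 / 2 : ℝ) *
        M ^ (2 / 5 : ℝ) * ENNReal.ofReal (B * ε ^ a' * t ^ b') ^ (1 / 10 : ℝ)) := by gcongr
    _ = _ := by
      rw [ofReal_mul_rpow_mul_rpow_rpow (mul_nonneg hCf hA) hε ht _ _ (by norm_num),
        ofReal_mul_rpow_mul_rpow_rpow hB hε ht _ _ (by norm_num), regionConst,
        show a / 2 + a' / 10 = a * (1 / 2) + a' * (1 / 10) by ring,
        show b / 2 + b' / 10 = b * (1 / 2) + b' * (1 / 10) by ring,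
        ENNReal.rpow_add _ _ hε0 ENNReal.ofReal_ne_top,
        ENNReal.rpow_add _ _ ht0 ENNReal.ofReal_ne_top]
      ring

theorem residualWeight_two_fifths_le {e τ ε : ℝ} (he : 0 < e) (hτ : 0 < τ) (hτt : τ ≤ t)
    (hε : 0 < ε) (hfar : ε * τ ≤ e) :
    residualWeight (2 / 5) e τ ≤
      ENNReal.ofReal (e ^ (-1 - 1 / 10 : ℝ) * min t (e / ε) ^ (2 * (1 / 10) : ℝ)) ^ (1 / 2 : ℝ) *
        ENNReal.ofReal (e ^ (-(3 / 2) : ℝ)) ^ (1 / 10 : ℝ) := by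
  have hmin : τ ≤ min t (e / ε) := le_min hτt ((le_div_iff₀' hε).2 hfar)
  have hmin0 : 0 ≤ min t (e / ε) := hτ.le.trans hmin
  rw [residualWeight, ENNReal.ofReal_rpow_of_nonneg (by positivity) (by norm_num),
    ENNReal.ofReal_rpow_of_nonneg (by positivity) (by norm_num),
    ← ENNReal.ofReal_mul (by positivity), Real.mul_rpow (by positivity) (by positivity),
    ← Real.rpow_mul he.le, ← Real.rpow_mul he.le, ← Real.rpow_mul hmin0, mul_right_comm,
    ← Real.rpow_add he]
  norm_num
  gcongr

theorem residualWeight_zero {e τ : ℝ} (he : 0 < e) (hτ : 0 < τ) :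
    residualWeight 0 e τ =
      ENNReal.ofReal (e ^ (-(4 / 5) : ℝ)) ^ (1 / 2 : ℝ) *
        (ENNReal.ofReal (τ ^ (-(1 + 2) : ℝ)) * ENNReal.ofReal (e ^ (1 : ℝ))) ^ (1 / 10 : ℝ) := by
  rw [residualWeight, ← ENNReal.ofReal_mul (by positivity),
    ENNReal.ofReal_rpow_of_nonneg (by positivity) (by norm_num),
    ENNReal.ofReal_rpow_of_nonneg (by positivity) (by norm_num),
    ← ENNReal.ofReal_mul (by positivity), Real.mul_rpow (by positivity) (by positivity),
    ← Real.rpow_mul he.le, ← Real.rpow_mul he.le, ← Real.rpow_mul hτ.le, mul_left_comm, mul_comm,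
    ← Real.rpow_add he]
  norm_num

theorem setLIntegral_scatteringDensity_far_le (hK : Measurable (Function.uncurry Kg))
    (hK0 : ∀ s y, 0 ≤ Kg s y) (hCf : 0 ≤ Cf)
    (hflux : ∀ a ∈ Ioc 0 t, coneFlux Kg a x ≤ ENNReal.ofReal Cf)
    (hf : Measurable fun z : ℝ × ℝ² × ℝ² => f z.1 z.2.1 z.2.2)
    (hfC : ∀ᵐ z : ℝ × ℝ² × ℝ², f z.1 z.2.1 z.2.2 ≤ C₀) (ht : 0 < t) {ε : ℝ} (hε : 0 < ε) :
    ∫⁻ z in backwardCone t x ∩ {z | ε * (t - z.1) ≤ coneDepth t x z},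
        scatteringDensity Kg f t x z ≤
      regionConst C₀ Cf (2 / 5) 20 (8 * Real.pi / 3) * ENNReal.ofReal t ^ (1 / 5 : ℝ) *
        (ENNReal.ofReal ε ^ (-(1 / 10) : ℝ) *
          (∫⁻ z in backwardCone t x, weightedMoment f 2 t x z) ^ (2 / 5 : ℝ)) := by
  have hfar : MeasurableSet {z : ℝ × ℝ² | ε * (t - z.1) ≤ coneDepth t x z} :=
    measurableSet_le (by fun_prop) (by fun_prop)
  have hV : Measurable fun z : ℝ × ℝ² => (Ici (ε * (t - z.1))).indicator
      (fun e => ENNReal.ofReal (e ^ (-(3 / 2) : ℝ))) (coneDepth t x z) :=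
    Measurable.indicator (f := fun z => ENNReal.ofReal (coneDepth t x z ^ (-(3 / 2) : ℝ)))
      (by fun_prop) hfar
  have hWint := setLIntegral_Ioc_rpow_mul_min_rpow_le (a := 1 / 10) (by norm_num) hε ht
  have hVint := setLIntegral_backwardCone_indicator_Ici_le (r := -(3 / 2)) (by norm_num)
    (by norm_num) hε ht.le x
  refine (setLIntegral_scatteringDensity_le_of_weights hK hK0 hCf hflux hf hfC (β := 2 / 5)
    (by norm_num) (by norm_num) (n := 2) (by norm_num) (measurableSet_backwardCone.inter hfar)
    inter_subset_left (by fun_prop) hV ?_ (by positivity) (by positivity) hε ht hWint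
    hVint).trans_eq ?_
  · rintro z ⟨hcone, hz⟩ hdepth
    have hdist : 0 ≤ dist z.2 x := dist_nonneg
    have hτt : t - z.1 ≤ t := sub_le_self t hcone.1.1.le
    rw [indicator_of_mem (mem_Ici.2 hz)]
    exact residualWeight_two_fifths_le hdepth (hdist.trans_lt (sub_pos.1 hdepth)) hτt hε hz
  · rw [show 8 * Real.pi / 3 = 2 * Real.pi / (3 / 4) by ring]
    norm_num

theorem setLIntegral_scatteringDensity_near_le (hK : Measurable (Function.uncurry Kg))
    (hK0 : ∀ s y, 0 ≤ Kg s y) (hCf : 0 ≤ Cf)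
    (hflux : ∀ a ∈ Ioc 0 t, coneFlux Kg a x ≤ ENNReal.ofReal Cf)
    (hf : Measurable fun z : ℝ × ℝ² × ℝ² => f z.1 z.2.1 z.2.2)
    (hfC : ∀ᵐ z : ℝ × ℝ² × ℝ², f z.1 z.2.1 z.2.2 ≤ C₀) (ht : 0 < t) {ε : ℝ} (hε : 0 < ε) :
    ∫⁻ z in backwardCone t x ∩ {z | coneDepth t x z ≤ ε * (t - z.1)},
        scatteringDensity Kg f t x z ≤
      regionConst C₀ Cf 0 5 Real.pi * ENNReal.ofReal t ^ (1 / 5 : ℝ) *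
        (ENNReal.ofReal ε ^ (3 / 10 : ℝ) *
          (∫⁻ z in backwardCone t x, weightedMoment f 4 t x z) ^ (2 / 5 : ℝ)) := by
  have hnear : MeasurableSet {z : ℝ × ℝ² | coneDepth t x z ≤ ε * (t - z.1)} :=
    measurableSet_le (by fun_prop) (by fun_prop)
  have hW : Measurable ((Iic (ε * t)).indicator fun e : ℝ => ENNReal.ofReal (e ^ (-(4 / 5) : ℝ))) :=
    Measurable.indicator (by fun_prop) measurableSet_Iic
  have hV : Measurable fun z : ℝ × ℝ² => ENNReal.ofReal ((t - z.1) ^ (-(1 + 2) : ℝ)) *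
      (Iic (ε * (t - z.1))).indicator (fun e => ENNReal.ofReal (e ^ (1 : ℝ))) (coneDepth t x z) :=
    Measurable.mul (by fun_prop) (Measurable.indicator
      (f := fun z => ENNReal.ofReal (coneDepth t x z ^ (1 : ℝ))) (by fun_prop) hnear)
  have hWint : ∫⁻ e in Ioc 0 t, (Iic (ε * t)).indicator
      (fun e : ℝ => ENNReal.ofReal (e ^ (-(4 / 5) : ℝ))) e ≤
        ENNReal.ofReal (5 * ε ^ (1 / 5 : ℝ) * t ^ (1 / 5 : ℝ)) := by
    refine (setLIntegral_Ioc_indicator_Iic_le (by norm_num) (by positivity)).trans_eq ?_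
    rw [Real.mul_rpow hε.le ht.le]
    norm_num
    ring_nf
  have hVint : ∫⁻ z in backwardCone t x, ENNReal.ofReal ((t - z.1) ^ (-(1 + 2) : ℝ)) *
      (Iic (ε * (t - z.1))).indicator (fun e => ENNReal.ofReal (e ^ (1 : ℝ))) (coneDepth t x z) ≤
        ENNReal.ofReal (Real.pi * ε ^ (2 : ℝ) * t ^ (1 : ℝ)) := by
    refine (setLIntegral_backwardCone_indicator_Iic_le (by norm_num) hε.le t x).trans_eq ?_
    norm_num
  refine (setLIntegral_scatteringDensity_le_of_weights hK hK0 hCf hflux hf hfC le_rfl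
    (by norm_num) (n := 4) (by norm_num) (measurableSet_backwardCone.inter hnear) inter_subset_left
    hW hV ?_ (by positivity) (by positivity) hε ht hWint
    hVint).trans_eq ?_
  · rintro z ⟨hcone, hz⟩ hdepth
    have hdist : 0 ≤ dist z.2 x := dist_nonneg
    have hτt : t - z.1 ≤ t := sub_le_self t hcone.1.1.le
    have hzt : coneDepth t x z ≤ ε * t := hz.trans (by gcongr)
    rw [indicator_of_mem (mem_Iic.2 hzt), indicator_of_mem (mem_Iic.2 hz)]
    exact (residualWeight_zero hdepth (hdist.trans_lt (sub_pos.1 hdepth))).le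
  · norm_num

/-- The constant of `setLIntegral_backwardCone_scatteringDensity_le`: the sum of the constants for
the interior region, with `β = 2 / 5`, and for the shell along the mantle, with `β = 0`. -/
noncomputable def coneConst (C₀ Cf : ℝ) : ℝ≥0∞ :=
  regionConst C₀ Cf (2 / 5) 20 (8 * Real.pi / 3) + regionConst C₀ Cf 0 5 Real.pi

theorem coneConst_ne_top : coneConst C₀ Cf ≠ ∞ :=
  ENNReal.add_ne_top.2 ⟨regionConst_ne_top (by norm_num), regionConst_ne_top (by norm_num)⟩

theorem coneConst_pos (hCf : 0 < Cf) : 0 < coneConst C₀ Cf :=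
  (regionConst_pos hCf (by norm_num) Real.pi_pos).trans_le le_add_self

theorem setLIntegral_backwardCone_scatteringDensity_le (hK : Measurable (Function.uncurry Kg))
    (hK0 : ∀ s y, 0 ≤ Kg s y) (hCf : 0 ≤ Cf)
    (hflux : ∀ a ∈ Ioc 0 t, coneFlux Kg a x ≤ ENNReal.ofReal Cf)
    (hf : Measurable fun z : ℝ × ℝ² × ℝ² => f z.1 z.2.1 z.2.2)
    (hfC : ∀ᵐ z : ℝ × ℝ² × ℝ², f z.1 z.2.1 z.2.2 ≤ C₀) (ht : 0 < t) {ε : ℝ} (hε : 0 < ε) :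
    ∫⁻ z in backwardCone t x, scatteringDensity Kg f t x z ≤
      coneConst C₀ Cf * ENNReal.ofReal t ^ (1 / 5 : ℝ) *
        (ENNReal.ofReal ε ^ (-(1 / 10) : ℝ) *
            (∫⁻ z in backwardCone t x, weightedMoment f 2 t x z) ^ (2 / 5 : ℝ) +
          ENNReal.ofReal ε ^ (3 / 10 : ℝ) *
            (∫⁻ z in backwardCone t x, weightedMoment f 4 t x z) ^ (2 / 5 : ℝ)) := by
  have hcover : backwardCone t x ⊆ backwardCone t x ∩ {z | ε * (t - z.1) ≤ coneDepth t x z} ∪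
      backwardCone t x ∩ {z | coneDepth t x z ≤ ε * (t - z.1)} := fun z hz =>
    (le_total (ε * (t - z.1)) (coneDepth t x z)).imp (And.intro hz) (And.intro hz)
  refine (lintegral_mono_set hcover).trans ((lintegral_union_le _ _ _).trans ((add_le_add
    (setLIntegral_scatteringDensity_far_le hK hK0 hCf hflux hf hfC ht hε)
    (setLIntegral_scatteringDensity_near_le hK hK0 hCf hflux hf hfC ht hε)).trans ?_))
  rw [mul_add]
  gcongr
  exacts [le_self_add, le_add_self]

end ConeEstimate

theorem KS2_estimate_2d_general (C₀ Cf : ℝ) (hCf : 0 < Cf) :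
    ∃ C : ℝ≥0, 0 < C ∧ ∀ t : ℝ, 0 < t → ∀ (x : ℝ²) (Kg : ℝ → ℝ² → ℝ),
      Measurable (Function.uncurry Kg) → (∀ s y, 0 ≤ Kg s y) →
      (∀ a ∈ Ioc 0 t, coneFlux Kg a x ≤ ENNReal.ofReal Cf) →
      ∀ f : ℝ → ℝ² → ℝ² → ℝ, (Measurable fun z : ℝ × ℝ² × ℝ² => f z.1 z.2.1 z.2.2) →
      (∀ s y p, 0 ≤ f s y p) → (∀ᵐ z : ℝ × ℝ² × ℝ², f z.1 z.2.1 z.2.2 ≤ C₀) →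
      ∀ ε : ℝ, 0 < ε →
        ∫⁻ s in Ioc 0 t, ∫⁻ y in {y | dist y x ≤ t - s}, scatteringDensity Kg f t x (s, y) ≤
          C * ENNReal.ofReal t ^ (1 / 5 : ℝ) *
            (ENNReal.ofReal ε ^ (-(1 / 10) : ℝ) * (∫⁻ s in Ioc 0 t,
                ∫⁻ y in {y | dist y x ≤ t - s}, weightedMoment f 2 t x (s, y)) ^ (2 / 5 : ℝ) +
              ENNReal.ofReal ε ^ (3 / 10 : ℝ) * (∫⁻ s in Ioc 0 t,
                ∫⁻ y in {y | dist y x ≤ t - s}, weightedMoment f 4 t x (s, y)) ^ (2 / 5 : ℝ)) := by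
  lift coneConst C₀ Cf to ℝ≥0 using coneConst_ne_top with C hC
  refine ⟨C, ENNReal.coe_pos.1 (hC ▸ coneConst_pos hCf), ?_⟩
  intro t ht x Kg hK hK0 hflux f hf _ hfC ε hε
  have h := setLIntegral_backwardCone_scatteringDensity_le hK hK0 hCf.le hflux hf hfC ht hε
  rwa [setLIntegral_backwardCone (measurable_scatteringDensity hK hf),
    setLIntegral_backwardCone (measurable_weightedMoment hf 2),
    setLIntegral_backwardCone (measurable_weightedMoment hf 4), ← hC] at h

/-- **Estimate for the Glassey–Schaeffer term `K_{S,2}` in two dimensions**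
(Proposition 5.4).  If the flux of `K_g` on every backward cone with tip `(a,x)`,
`a ∈ [0,t]`, is at most `C_f`, and `f ≤ C₀` a.e., then for `ε ∈ (0,1]`, with
`ξ = (y−x)/(t−s)`,
`∫₀ᵗ∫_{|y−x|≤t−s}∫ K_g f/(p₀(1+p̂·ξ)√((t−s)²−|y−x|²)) dp dy ds
 ≤ C(1+t)^k[ε^{−1/10}(∫₀ᵗ∫ (∫p₀²f)/√(...))^{2/5} + ε^{3/10}(∫₀ᵗ∫ (∫p₀⁴f)/√(...))^{2/5}]`. -/
theorem KS2_estimate_2d :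
    ∃ k : ℝ, 0 ≤ k ∧
    ∀ C₀ Cf : ℝ, 0 < C₀ → 0 < Cf →
    ∃ C : ℝ≥0, 0 < C ∧
      ∀ (t : ℝ), 0 < t → ∀ (x : EuclideanSpace ℝ (Fin 2)),
      ∀ (Kg : ℝ → EuclideanSpace ℝ (Fin 2) → ℝ),
        Measurable (Function.uncurry Kg) → (∀ s y, 0 ≤ Kg s y) →
        (∀ a, 0 ≤ a → a ≤ t → coneFlux Kg a x ≤ ENNReal.ofReal Cf) →
      ∀ (f : ℝ → EuclideanSpace ℝ (Fin 2) → EuclideanSpace ℝ (Fin 2) → ℝ),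
        Measurable (fun z : ℝ × EuclideanSpace ℝ (Fin 2) × EuclideanSpace ℝ (Fin 2) =>
          f z.1 z.2.1 z.2.2) →
        (∀ s y p, 0 ≤ f s y p) →
        (∀ᵐ z : ℝ × EuclideanSpace ℝ (Fin 2) × EuclideanSpace ℝ (Fin 2),
          f z.1 z.2.1 z.2.2 ≤ C₀) →
        ∀ ε : ℝ, 0 < ε → ε ≤ 1 →
          (∫⁻ s in Ioc (0 : ℝ) t, ∫⁻ y in {y | dist y x ≤ t - s},
              ∫⁻ p, ENNReal.ofReal (Kg s y * f s y p /
                (pZero p * (1 + ⟪pHat p, (t - s)⁻¹ • (y - x)⟫)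
                  * Real.sqrt ((t - s) ^ 2 - dist y x ^ 2))))
            ≤ C * ENNReal.ofReal (1 + t) ^ k *
              (ENNReal.ofReal ε ^ (-(1 / 10) : ℝ) *
                (∫⁻ s in Ioc (0 : ℝ) t, ∫⁻ y in {y | dist y x ≤ t - s},
                  (∫⁻ p, ENNReal.ofReal (pZero p ^ 2 * f s y p))
                    / ENNReal.ofReal (Real.sqrt ((t - s) ^ 2 - dist y x ^ 2)))
                      ^ ((2 : ℝ) / 5)
              + ENNReal.ofReal ε ^ ((3 : ℝ) / 10) *
                (∫⁻ s in Ioc (0 : ℝ) t, ∫⁻ y in {y | dist y x ≤ t - s},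
                  (∫⁻ p, ENNReal.ofReal (pZero p ^ 4 * f s y p))
                    / ENNReal.ofReal (Real.sqrt ((t - s) ^ 2 - dist y x ^ 2)))
                      ^ ((2 : ℝ) / 5)) := by
  refine ⟨1 / 5, by norm_num, fun C₀ Cf _ hCf => ?_⟩
  obtain ⟨C, hC, hbound⟩ := KS2_estimate_2d_general C₀ Cf hCf
  refine ⟨C, hC, fun t ht x Kg hK hK0 hflux f hf hf0 hfC ε hε _ => ?_⟩
  refine (hbound t ht x Kg hK hK0 (fun a ha => hflux a ha.1.le ha.2) f hf hf0 hfC ε hε).trans ?_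
  gcongr _ * ENNReal.ofReal ?_ ^ _ * _
  linarith
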